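/- arXiv:1203.0686 — 2 statements merged into one kernel-verified Lean document; each statement's English description precedes it below -/
import Mathlib

section
/- Fix a positive integer n and assume hypothesis (⋆): for every index set I of cardinality less than 𝔠, every family (F_i)_{i∈I} of closed Lebesgue-null subsets of ℝ^n, and every Lebesgue-null set N ⊆ ℝ^n, the union N ∪ ⋃_{i∈I} F_i is not all of ℝ^n. Then there exists a set A ⊆ ℝ^n such that A does not have Lebesgue outer measure zero, and for every continuous function f : ℝ^n → ℝ the image f(A) contains no non-degenerate interval (i.e., for all a < b, the open interval (a,b) is not contained in f(A)). -/
open MeasureTheory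
open scoped ENNReal

/-!
Well-order, with order type at most `𝔠`, all triples consisting of a measurable null set `N`, a
continuous function `f` and an uncountable Borel set `B`. At stage `i` pick first a value `y i` in
`B i` with null level set `f i ⁻¹' {y i}` that differs from all `f i (x j)`, `j < i`: this excludes
only countably many values and fewer than `𝔠` further ones. Then pick a point `x i` outside the null
set `N i ∪ f i ⁻¹' {y i}` and outside the fewer than `𝔠` earlier level sets `f j ⁻¹' {y j}`, which
are closed and null; this is what (⋆) allows. The points `x i` form a set contained in no null set,
while its image under `f i` misses `y i ∈ B i`.
-/

open Set
open Cardinal hiding univ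

universe u v w

section Cardinality

theorem exists_pairwise_of_forall_mk_lt {ι : Type u} {β : ι → Type v}
    {R : ∀ ⦃i j⦄, β i → β j → Prop} (symm : ∀ ⦃i j⦄ {b : β i} {c : β j}, R b c → R c b)
    (extend : ∀ (s : Set ι), #s < #ι → ∀ (g : ∀ j : s, β j) (i : ι), ∃ b : β i, ∀ j, R b (g j)) :
    ∃ g : ∀ i, β i, Pairwise fun i j => R (g i) (g j) := by
  obtain ⟨_, _, hι⟩ := exists_ord_eq_type_lt ι
  choose next hnext using fun i (g : ∀ j : Iio i, β j) => extend _ (mk_Iio_lt i hι) g i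
  let g : ∀ i, β i := WellFoundedLT.fix fun i g => next i fun j => g j j.2
  have hg {i j : ι} (hji : j < i) : R (g i) (g j) := by
    have hgi : g i = next i fun j => g j := WellFoundedLT.fix_eq _ i
    exact hgi ▸ hnext i (fun j => g j) ⟨j, hji⟩
  refine ⟨g, fun i j hij => ?_⟩
  rcases hij.lt_or_gt with hlt | hgt
  · exact symm (hg hlt)
  · exact hg hgt

theorem mk_prod_le_continuum {α : Type u} {β : Type v} (hα : #α ≤ 𝔠) (hβ : #β ≤ 𝔠) :
    #(α × β) ≤ 𝔠 := by
  rw [mk_prod, ← continuum_mul_self]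
  exact mul_le_mul' (by simpa using hα) (by simpa using hβ)

theorem mk_range_lt_continuum {ι : Type u} {α : Type v} (hι : #ι < 𝔠) (f : ι → α) :
    #(range f) < 𝔠 := by
  rw [← lift_lt.{v, u}, lift_continuum]
  exact mk_range_le_lift.trans_lt (by simpa using hι)

theorem mk_le_continuum_of_standardBorelSpace (Y : Type u) [MeasurableSpace Y]
    [StandardBorelSpace Y] : #Y ≤ 𝔠 := by
  simpa [mk_real] using
    lift_mk_le_lift_mk_of_injective (measurableEmbedding_embeddingReal Y).injective

theorem mk_eq_continuum_of_measurableSet_of_not_countable {Y : Type u} [MeasurableSpace Y]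
    [StandardBorelSpace Y] {B : Set Y} (hB : MeasurableSet B) (hBc : ¬B.Countable) : #B = 𝔠 := by
  have := hB.standardBorel
  have e : B ≃ᵐ ℝ := PolishSpace.measurableEquivOfNotCountable hBc not_countable
  simpa [mk_real] using lift_mk_eq'.2 ⟨e.toEquiv⟩

theorem mk_measurableSet_le_continuum (X : Type u) [MeasurableSpace X]
    [MeasurableSpace.CountablyGenerated X] : #{s : Set X | MeasurableSet s} ≤ 𝔠 := by
  obtain ⟨b, hb, rfl⟩ := MeasurableSpace.CountablyGenerated.isCountablyGenerated (α := X)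
  exact MeasurableSpace.cardinal_measurableSet_le_continuum
    (hb.le_aleph0.trans aleph0_le_continuum)

theorem mk_continuousMap_le_continuum (X : Type u) (Y : Type v) [TopologicalSpace X]
    [TopologicalSpace.SeparableSpace X] [TopologicalSpace Y] [T2Space Y] (hY : #Y ≤ 𝔠) :
    #C(X, Y) ≤ 𝔠 := by
  obtain ⟨s, hs, hsd⟩ := TopologicalSpace.exists_countable_dense X
  have restrict_injective : Function.Injective fun (f : C(X, Y)) (x : s) => f x :=
    fun f g hfg => DFunLike.coe_injective <|
      f.continuous.ext_on hsd g.continuous fun x hx => congrFun hfg ⟨x, hx⟩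
  calc #C(X, Y) ≤ #(s → Y) := mk_le_of_injective restrict_injective
    _ = lift #Y ^ lift #s := mk_arrow s Y
    _ ≤ 𝔠 ^ lift #s := power_le_power_right (by simpa using hY)
    _ ≤ 𝔠 ^ ℵ₀ := power_le_power_left continuum_ne_zero (by simpa using hs.le_aleph0)
    _ = 𝔠 := continuum_power_aleph0

end Cardinality

section NullSets

theorem exists_mem_notMem_measure_preimage_singleton_eq_zero {X : Type u} {Y : Type v}
    [MeasurableSpace X] (μ : Measure X) [SFinite μ] [MeasurableSpace Y]
    [MeasurableSingletonClass Y] {f : X → Y} (hf : Measurable f) {B S : Set Y} (hB : 𝔠 ≤ #B)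
    (hS : #S < 𝔠) : ∃ y ∈ B, y ∉ S ∧ μ (f ⁻¹' {y}) = 0 := by
  have countable_pos : {y | 0 < μ (f ⁻¹' {y})}.Countable :=
    Measure.countable_meas_level_set_pos hf
  have mk_excluded_lt : #(S ∪ {y | 0 < μ (f ⁻¹' {y})} : Set Y) < #B :=
    (mk_union_le _ _).trans_lt <| (add_lt_of_lt aleph0_le_continuum hS <|
      countable_pos.le_aleph0.trans_lt aleph0_lt_continuum).trans_le hB
  obtain ⟨y, hyB, hy⟩ := sdiff_nonempty_of_mk_lt_mk mk_excluded_lt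
  rw [mem_union, not_or] at hy
  exact ⟨y, hyB, hy.1, by simpa using hy.2⟩

variable {X : Type u} {Y : Type v} [TopologicalSpace X] [MeasurableSpace X]

/-- Hypothesis (⋆) for a measure `μ`: fewer than continuum many closed `μ`-null sets together with
one further `μ`-null set do not cover the space. The closed sets are given as a set of sets rather
than as an indexed family, so that no universe has to be chosen for the indices. -/
def NoSmallClosedNullCover (μ : Measure X) : Prop :=
  ∀ (𝓕 : Set (Set X)) (N : Set X), #𝓕 < 𝔠 → (∀ F ∈ 𝓕, IsClosed F ∧ μ F = 0) → μ N = 0 →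
    N ∪ ⋃₀ 𝓕 ≠ univ

variable {μ : Measure X}

theorem NoSmallClosedNullCover.exists_notMem (hμ : NoSmallClosedNullCover μ) {ι : Type w}
    (hι : #ι < 𝔠) {F : ι → Set X} (hFc : ∀ i, IsClosed (F i)) (hF : ∀ i, μ (F i) = 0)
    {N : Set X} (hN : μ N = 0) : ∃ x ∉ N, ∀ i, x ∉ F i := by
  have not_cover := hμ (range F) N (mk_range_lt_continuum hι F)
    (forall_mem_range.2 fun i => ⟨hFc i, hF i⟩) hN
  simpa [ne_univ_iff_exists_notMem] using not_cover

theorem NoSmallClosedNullCover.measure_univ_ne_zero (hμ : NoSmallClosedNullCover μ) :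
    μ univ ≠ 0 := fun h => by
  obtain ⟨x, hx, -⟩ := hμ.exists_notMem (ι := Empty) (F := fun _ => ∅) (by simp [continuum_pos])
    nofun nofun h
  exact hx (mem_univ x)

/-- The choice made at one stage of the recursion: a point outside the null set `N`, and a value in
`B` that `f` does not take at this point and whose level set, as all later points have to avoid it,
is null. -/
structure AvoidingPair (μ : Measure X) (N : Set X) (f : X → Y) (B : Set Y) where
  point : X
  value : Y
  point_notMem : point ∉ N
  value_mem : value ∈ B
  apply_point_ne : f point ≠ value
  measure_level : μ (f ⁻¹' {value}) = 0

theorem NoSmallClosedNullCover.exists_avoidingPair [OpensMeasurableSpace X] [SFinite μ]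
    [TopologicalSpace Y] [T1Space Y] (hμ : NoSmallClosedNullCover μ) {N : Set X} (hN : μ N = 0)
    {f : X → Y} (hf : Continuous f) {B : Set Y} (hB : 𝔠 ≤ #B) {ι : Type w} (hι : #ι < 𝔠)
    (y : ι → Y) {F : ι → Set X} (hFc : ∀ i, IsClosed (F i)) (hF : ∀ i, μ (F i) = 0) :
    ∃ p : AvoidingPair μ N f B, ∀ i, y i ≠ p.value ∧ p.point ∉ F i := by
  borelize Y
  obtain ⟨value, value_mem, value_notMem, measure_level⟩ :=
    exists_mem_notMem_measure_preimage_singleton_eq_zero μ hf.measurable hB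
      (mk_range_lt_continuum hι y)
  obtain ⟨point, point_notMem, hpoint⟩ :=
    hμ.exists_notMem hι hFc hF (measure_union_null hN measure_level)
  rw [mem_union, not_or] at point_notMem
  exact ⟨⟨point, value, point_notMem.1, value_mem, point_notMem.2, measure_level⟩,
    fun i => ⟨fun h => value_notMem ⟨i, h⟩, hpoint i⟩⟩

theorem NoSmallClosedNullCover.exists_forall_apply_ne [OpensMeasurableSpace X] [SFinite μ]
    [TopologicalSpace Y] [T1Space Y] (hμ : NoSmallClosedNullCover μ) {ι : Type w} (hι : #ι ≤ 𝔠)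
    {N : ι → Set X} (hN : ∀ i, μ (N i) = 0) {f : ι → X → Y} (hf : ∀ i, Continuous (f i))
    {B : ι → Set Y} (hB : ∀ i, 𝔠 ≤ #(B i)) :
    ∃ (x : ι → X) (y : ι → Y), (∀ i, x i ∉ N i) ∧ (∀ i, y i ∈ B i) ∧ ∀ i j, f i (x j) ≠ y i := by
  let β (i : ι) := AvoidingPair μ (N i) (f i) (B i)
  let R ⦃i j : ι⦄ (p : β i) (q : β j) : Prop := f i q.point ≠ p.value ∧ f j p.point ≠ q.value
  have extend (s : Set ι) (hs : #s < #ι) (g : ∀ j : s, β j) (i : ι) : ∃ p : β i, ∀ j, R p (g j) :=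
    hμ.exists_avoidingPair (hN i) (hf i) (hB i) (hs.trans_le hι) (fun j => f i (g j).point)
      (F := fun j => f j ⁻¹' {(g j).value}) (fun j => isClosed_singleton.preimage (hf j))
      (fun j => (g j).measure_level)
  obtain ⟨g, hg⟩ := exists_pairwise_of_forall_mk_lt (R := R) (fun _ _ _ _ h => h.symm) extend
  refine ⟨fun i => (g i).point, fun i => (g i).value, fun i => (g i).point_notMem,
    fun i => (g i).value_mem, fun i j => ?_⟩
  obtain rfl | hij := eq_or_ne i j
  · exact (g i).apply_point_ne
  · exact (hg hij).1

theorem star_imp_exists_nonNull_set_continuous_image_no_interval_general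
    [OpensMeasurableSpace X] [MeasurableSpace.CountablyGenerated X]
    [TopologicalSpace.SeparableSpace X] [SFinite μ] [TopologicalSpace Y] [PolishSpace Y]
    [MeasurableSpace Y] [BorelSpace Y] (hμ : NoSmallClosedNullCover μ) :
    ∃ A : Set X, μ A ≠ 0 ∧
      ∀ f : X → Y, Continuous f → ∀ B ⊆ f '' A, MeasurableSet B → B.Countable := by
  let 𝓝 := {N : Set X // MeasurableSet N ∧ μ N = 0}
  let 𝓑 := {B : Set Y // MeasurableSet B ∧ ¬B.Countable}
  have mk_index_le : #(𝓝 × C(X, Y) × 𝓑) ≤ 𝔠 := by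
    have h𝓝 : #𝓝 ≤ 𝔠 :=
      (mk_subtype_mono fun _ h => h.1).trans (mk_measurableSet_le_continuum X)
    have h𝓑 : #𝓑 ≤ 𝔠 :=
      (mk_subtype_mono fun _ h => h.1).trans (mk_measurableSet_le_continuum Y)
    have hC : #C(X, Y) ≤ 𝔠 :=
      mk_continuousMap_le_continuum X Y (mk_le_continuum_of_standardBorelSpace Y)
    exact mk_prod_le_continuum h𝓝 (mk_prod_le_continuum hC h𝓑)
  obtain ⟨x, y, hxN, hyB, hxy⟩ := hμ.exists_forall_apply_ne mk_index_le
    (N := fun i => i.1.1) (fun i => i.1.2.2) (f := fun i => i.2.1) (fun i => i.2.1.continuous)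
    (B := fun i => i.2.2.1)
    (fun i => (mk_eq_continuum_of_measurableSet_of_not_countable i.2.2.2.1 i.2.2.2.2).ge)
  obtain _ | ⟨⟨fB⟩⟩ := isEmpty_or_nonempty (C(X, Y) × 𝓑)
  · refine ⟨univ, hμ.measure_univ_ne_zero, fun f hf B _ hB => ?_⟩
    by_contra hBc
    exact isEmptyElim ((⟨f, hf⟩, ⟨B, hB, hBc⟩) : C(X, Y) × 𝓑)
  · refine ⟨range x, fun hA => ?_, fun f hf B hBA hB => ?_⟩
    · obtain ⟨N, hAN, hN, hN0⟩ := exists_measurable_superset_of_null hA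
      exact hxN (⟨N, hN, hN0⟩, fB) (hAN (mem_range_self _))
    · by_contra hBc
      let i : 𝓝 × C(X, Y) × 𝓑 :=
        (⟨∅, .empty, measure_empty⟩, ⟨f, hf⟩, ⟨B, hB, hBc⟩)
      obtain ⟨_, ⟨j, rfl⟩, hj⟩ := hBA (hyB i)
      exact hxy i j hj

end NullSets

/-- Fix a positive integer `n` and assume hypothesis (⋆): fewer than continuum
many closed Lebesgue-null subsets of `ℝ^n` together with one Lebesgue-null set cannot cover
`ℝ^n`. Then there exists a set `A ⊆ ℝ^n` that does not have Lebesgue outer measure zero such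
that for every continuous `f : ℝ^n → ℝ` the image `f(A)` contains no non-degenerate interval. -/
theorem star_imp_exists_nonNull_set_continuous_image_no_interval
    (n : ℕ) (hn : 0 < n)
    (hstar : ∀ (I : Type) (F : I → Set (EuclideanSpace ℝ (Fin n)))
        (N : Set (EuclideanSpace ℝ (Fin n))),
      Cardinal.mk I < Cardinal.continuum →
      (∀ i, IsClosed (F i) ∧ volume (F i) = 0) →
      volume N = 0 →
      N ∪ ⋃ i, F i ≠ Set.univ) :
    ∃ A : Set (EuclideanSpace ℝ (Fin n)),
      volume A ≠ 0 ∧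
      ∀ f : EuclideanSpace ℝ (Fin n) → ℝ, Continuous f →
        ∀ a b : ℝ, a < b → ¬ Set.Ioo a b ⊆ f '' A := by
  obtain ⟨A, hA, hAf⟩ := star_imp_exists_nonNull_set_continuous_image_no_interval_general
    (μ := volume) (Y := ℝ) fun 𝓕 N h𝓕 hF hN => by
      simpa only [sUnion_eq_iUnion] using hstar 𝓕 (↑) N h𝓕 (fun F => hF F F.2) hN
  exact ⟨A, hA, fun f hf a b hab hsub =>
    (Real.Ioo_countable_iff.1 (hAf f hf _ hsub measurableSet_Ioo)).not_gt hab⟩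
end

section
/- For every gauge function φ (a strictly increasing bijection φ : [0,∞) → [0,∞)) there exists a separable metric space (X,d) whose cardinality equals cov(M) and whose φ-Hausdorff measure is positive: H^φ(X) > 0. -/
open MeasureTheory
open scoped ENNReal NNReal

/-- `cov(M)`: the least cardinality of a family of meager subsets of `ℝ` whose union is `ℝ`. -/
noncomputable def covMeager : Cardinal :=
  sInf {c : Cardinal | ∃ (I : Type) (M : I → Set ℝ),
    Cardinal.mk I = c ∧ (∀ i, IsMeagre (M i)) ∧ (⋃ i, M i) = Set.univ}

/-!
If every `ι`-indexed family of sequences is guessed, i.e. met at least once by a single sequence,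
then `ι` many nowhere dense sets do not cover `ℝ`: list a family of compact sets `K j`, as small as
needed, let `e i j` be an index with `K (e i j) ⊆ K j` avoiding the `i`-th nowhere dense set, and
guess the functions `e i` along a sequence of indices that meets all of them. So there are `cov(M)`
many sequences that no single sequence guesses.

Make them into a metric space in which sequences that differ at the `n`-th term are at distance at
least `w n`, where `w` tends to `0` so slowly that `φ (w n)` is at least of order `1 / n`. Given a
cover by sets `t n` with `∑ φ (diam (t n))` small, Hall's theorem provides distinct coordinates
`k n` with `φ (diam (t n)) < φ (w (k n))`. All members of `t n` then agree at `k n`, and the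
sequence taking these common values guesses every point of the space, a contradiction.
-/

open Filter Function Set Topology
open scoped Cardinal

section Selection

variable {ι α : Type*}

theorem exists_injective_mem_of_exists_card_le (t : ι → Finset α)
    (h : ∀ s : Finset ι, s.Nonempty → ∃ i ∈ s, s.card ≤ (t i).card) :
    ∃ k : ι → α, Injective k ∧ ∀ i, k i ∈ t i := by
  classical
  refine (Finset.all_card_le_biUnion_card_iff_exists_injective t).1 fun s => ?_
  obtain rfl | hs := s.eq_empty_or_nonempty
  · simp
  · obtain ⟨i, hi, hcard⟩ := h s hs
    exact hcard.trans (Finset.card_le_card (Finset.subset_biUnion_of_mem t hi))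

theorem exists_injective_mem_of_lt_card (t : ℕ → Finset α) :
    ∃ k : {n // n < (t n).card} → α,
      Injective k ∧ ∀ n : {n // n < (t n).card}, k n ∈ t n := by
  refine exists_injective_mem_of_exists_card_le
    (fun n : {n // n < (t n).card} => t n) fun s hs => ?_
  obtain ⟨m, hm, hmax⟩ := s.exists_max_image Subtype.val hs
  refine ⟨m, hm, ?_⟩
  calc s.card ≤ (Finset.range (m + 1)).card :=
        Finset.card_le_card_of_injOn Subtype.val
          (fun n hn => by simpa [Nat.lt_succ_iff] using hmax n hn) Subtype.val_injective.injOn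
    _ = m + 1 := Finset.card_range _
    _ ≤ (t m).card := m.2

theorem exists_injective_forall_lt_div_of_tsum_lt_of_ne_zero {b : ι → ℝ≥0∞} {c : ℝ≥0∞}
    (hb : ∀ i, b i ≠ 0) (hc : c ≠ ∞) (hsum : ∑' i, b i < c) :
    ∃ k : ι → ℕ, Injective k ∧ ∀ i, b i < c / (k i + 1) := by
  have mem_iff (i : ι) (k : ℕ) : b i < c / (k + 1) ↔ (k + 1) * b i < c := by
    rw [ENNReal.lt_div_iff_mul_lt (by simp) (by simp), mul_comm]
  have hfin (i : ι) : {k : ℕ | b i < c / (k + 1)}.Finite := by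
    obtain ⟨N, hN⟩ := ENNReal.exists_nat_mul_gt (hb i) hc
    refine (Set.finite_lt_nat N).subset fun k hk => ?_
    have hkN : (k + 1 : ℝ≥0∞) * b i < N * b i := ((mem_iff i k).1 hk).trans hN
    exact_mod_cast le_self_add.trans_lt (lt_of_mul_lt_mul_right' hkN)
  obtain ⟨k, hk, hkb⟩ := exists_injective_mem_of_exists_card_le (fun i => (hfin i).toFinset)
    fun s hs => by
      obtain ⟨m, hm, hmin⟩ := s.exists_min_image b hs
      have hcard : s.card * b m < c :=
        calc s.card * b m = s.card • b m := (nsmul_eq_mul _ _).symm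
          _ ≤ ∑ i ∈ s, b i := Finset.card_nsmul_le_sum s b _ hmin
          _ ≤ ∑' i, b i := ENNReal.sum_le_tsum s
          _ < c := hsum
      have hsub : Finset.range s.card ⊆ (hfin m).toFinset := fun k hk => by
        rw [Set.Finite.mem_toFinset, Set.mem_ofPred_eq, mem_iff]
        refine lt_of_le_of_lt ?_ hcard
        gcongr
        exact_mod_cast Finset.mem_range.1 hk
      exact ⟨m, hm, by simpa using Finset.card_le_card hsub⟩
  exact ⟨k, hk, fun i => by simpa using hkb i⟩

theorem exists_injective_forall_lt_div_of_tsum_lt [Countable ι] {b : ι → ℝ≥0∞} {c : ℝ≥0∞}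
    (hsum : ∑' i, b i < c) : ∃ k : ι → ℕ, Injective k ∧ ∀ i, b i < c / (k i + 1) := by
  obtain ⟨c', hc', hcc'⟩ := exists_between hsum
  obtain ⟨ε, hε, hεsum⟩ := ENNReal.exists_pos_sum_of_countable' (tsub_pos_of_lt hc').ne' ι
  have hsum' : ∑' i, (b i + ε i) < c' := by
    rw [ENNReal.tsum_add, add_comm]
    exact lt_tsub_iff_right.1 hεsum
  obtain ⟨k, hk, hlt⟩ := exists_injective_forall_lt_div_of_tsum_lt_of_ne_zero
    (fun i => ((hε i).trans_le le_add_self).ne') hcc'.ne_top hsum'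
  refine ⟨k, hk, fun i => le_self_add.trans_lt ((hlt i).trans_le ?_)⟩
  exact ENNReal.div_le_div_right hcc'.le _

end Selection

section Guessing

/-- A type `ι` is guessable if every `ι`-indexed family of sequences of natural numbers is guessed
by a single sequence, which agrees with each member of the family at least once. By Bartoszyński's
theorem this expresses `#ι < cov(M)`; a single agreement is asked for, since infinitely many then
come for free when `ι` is infinite. -/
def Guessable (ι : Type*) : Prop :=
  ∀ f : ι → ℕ → ℕ, ∃ g : ℕ → ℕ, ∀ i, ∃ n, f i n = g n

namespace Guessable

variable {ι : Type*}

theorem of_surjective {κ : Type*} (h : Guessable ι) {e : ι → κ} (he : Surjective e) :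
    Guessable κ := fun f =>
  let ⟨g, hg⟩ := h (f ∘ e)
  ⟨g, he.forall.2 hg⟩

theorem prod_nat [Infinite ι] (h : Guessable ι) : Guessable (ι × ℕ) := by
  obtain ⟨e⟩ : Nonempty (ι ≃ ι × ℕ) := by
    rw [← Cardinal.lift_mk_eq']
    simp
  exact h.of_surjective e.surjective

theorem exists_forall_exists_eq (h : Guessable ι) {β : ℕ → Type*} [∀ n, Countable (β n)]
    [∀ n, Nonempty (β n)] (f : ι → ∀ n, β n) : ∃ g : ∀ n, β n, ∀ i, ∃ n, f i n = g n := by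
  choose code hcode using fun n => exists_injective_nat (β n)
  obtain ⟨g, hg⟩ := h fun i n => code n (f i n)
  refine ⟨fun n => invFun (code n) (g n), fun i => ?_⟩
  obtain ⟨n, hn⟩ := hg i
  exact ⟨n, by simp only [← hn, leftInverse_invFun (hcode n) _]⟩

/-- The `n`-th guess predicts `f i` on `n + 1` points of `A i` at once, which leaves room to choose
the points at which the predictions are used pairwise distinct. -/
theorem exists_forall_exists_mem_eq (h : Guessable ι) {β : ℕ → Type*} [∀ n, Countable (β n)]
    [∀ n, Nonempty (β n)] (f : ι → ∀ n, β n) {A : ι → Set ℕ} (hA : ∀ i, (A i).Infinite) :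
    ∃ g : ∀ n, β n, ∀ i, ∃ n ∈ A i, f i n = g n := by
  choose D hDA hD using fun i n => (hA i).exists_subset_card_eq (n + 1)
  obtain ⟨S, hS⟩ := h.exists_forall_exists_eq (β := fun _ => Σ D : Finset ℕ, ∀ m : D, β m)
    fun i n => ⟨D i n, fun m : D i n => f i m⟩
  obtain ⟨k, hk, hkS⟩ := exists_injective_mem_of_lt_card fun n => (S n).1
  have hglue (m : ℕ) : ∃ b : β m, ∀ n (hn : k n = m), b = (S n).2 ⟨m, hn ▸ hkS n⟩ := by
    by_cases hm : ∃ n, k n = m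
    · obtain ⟨n, rfl⟩ := hm
      refine ⟨(S n).2 ⟨k n, hkS n⟩, fun n' hn' => ?_⟩
      obtain rfl := hk hn'
      rfl
    · exact ⟨Classical.arbitrary _, fun n hn => absurd ⟨n, hn⟩ hm⟩
  choose g hg using hglue
  refine ⟨g, fun i => ?_⟩
  obtain ⟨n, hn⟩ := hS i
  have guess_eq : ∀ p : Σ D : Finset ℕ, ∀ m : D, β m, ⟨D i n, fun m : D i n => f i m⟩ = p →
      ∀ m (hm : m ∈ p.1), m ∈ D i n ∧ f i m = p.2 ⟨m, hm⟩ := by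
    rintro _ rfl m hm
    exact ⟨hm, rfl⟩
  have hcard : n < (S n).1.card := by simp [← hn, hD]
  obtain ⟨hmem, heq⟩ := guess_eq _ hn _ (hkS ⟨n, hcard⟩)
  exact ⟨k ⟨n, hcard⟩, hDA i n hmem, heq.trans (hg _ ⟨n, hcard⟩ rfl).symm⟩

end Guessable

theorem infinite_setOf_apply_le_succ {α : Type*} [LinearOrder α] {H : α → α} {J : ℕ → α}
    (hH : Monotone H) (hJ : Monotone J) (h : ∀ a, ∃ n, H^[n] a < J n) :
    {n | H (J n) ≤ J (n + 1)}.Infinite := by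
  rw [← Nat.frequently_atTop_iff_infinite]
  intro hev
  obtain ⟨N, hN⟩ := eventually_atTop.1 hev
  obtain ⟨n, hn⟩ := h (J N)
  have hle : J (N + n) ≤ H^[n] (J N) :=
    hH.seq_le_seq (x := fun k => J (N + k)) (y := fun k => H^[k] (J N)) n le_rfl
      (fun k _ => (not_le.1 (hN (N + k) (Nat.le_add_right _ _))).le)
      (fun k _ => (iterate_succ_apply' H k _).ge)
  exact (hn.trans_le (hJ (Nat.le_add_left n N))).not_ge hle

theorem Guessable.exists_monotone_infinite_setOf_forall_lt {ι : Type*} [Infinite ι]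
    (h : Guessable ι) (e : ι → ℕ → ℕ) :
    ∃ J : ℕ → ℕ, Monotone J ∧ 0 < J 0 ∧ ∀ i, {n | ∀ j < J n, e i j < J (n + 1)}.Infinite := by
  let H (i : ι) (m : ℕ) : ℕ := (Finset.range m).sup fun j => e i j + 1
  have hH (i : ι) : Monotone (H i) := fun _ _ hab => Finset.sup_mono (Finset.range_mono hab)
  obtain ⟨g, hg⟩ := h.prod_nat fun p n => (H p.1)^[n] p.2
  let J := partialSups fun n => g n + 1
  have hgJ (n : ℕ) : g n < J n := le_partialSups (fun n => g n + 1) n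
  refine ⟨J, J.monotone, (Nat.zero_le _).trans_lt (hgJ 0), fun i => ?_⟩
  refine (infinite_setOf_apply_le_succ (hH i) J.monotone fun m => ?_).mono fun n hn j hj => ?_
  · obtain ⟨n, hn⟩ := hg (i, m)
    exact ⟨n, hn.trans_lt (hgJ n)⟩
  · exact (Finset.le_sup (f := fun j => e i j + 1) (Finset.mem_range.2 hj)).trans hn

theorem exists_path_following {J : ℕ → ℕ} (hJ : Monotone J) (hJ₀ : 0 < J 0) (r : ℕ → ℕ → Prop)
    [Std.Refl r] (G : ∀ n, Fin (J n) → ℕ) :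
    ∃ P : ∀ n, Fin (J n), ∀ n, r (P (n + 1)) (P n) ∧
      (r (G n (P n)) (P n) → G n (P n) < J (n + 1) → P (n + 1) = G n (P n)) := by
  have step (n : ℕ) (p : Fin (J n)) : ∃ q : Fin (J (n + 1)), r q p ∧
      (r (G n p) p → G n p < J (n + 1) → q = G n p) := by
    by_cases hp : r (G n p) p ∧ G n p < J (n + 1)
    · exact ⟨⟨G n p, hp.2⟩, hp.1, fun _ _ => rfl⟩
    · exact ⟨p.castLE (hJ n.le_succ), refl_of r p, fun hr hlt => absurd ⟨hr, hlt⟩ hp⟩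
  choose next hnext using step
  let P (n : ℕ) : Fin (J n) := Nat.rec ⟨0, hJ₀⟩ next n
  exact ⟨P, fun n => hnext n (P n)⟩

theorem Guessable.exists_path_meeting {ι : Type*} [Infinite ι] (h : Guessable ι)
    (r : ℕ → ℕ → Prop) [Std.Refl r] {e : ι → ℕ → ℕ} (he : ∀ i j, r (e i j) j) :
    ∃ P : ℕ → ℕ, (∀ n, r (P (n + 1)) (P n)) ∧ ∀ i, ∃ n, P (n + 1) = e i (P n) := by
  obtain ⟨J, hJ, hJ₀, hinf⟩ := h.exists_monotone_infinite_setOf_forall_lt e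
  obtain ⟨G, hG⟩ := h.exists_forall_exists_mem_eq (fun i n (j : Fin (J n)) => e i j) hinf
  obtain ⟨P, hP⟩ := exists_path_following hJ hJ₀ r G
  refine ⟨fun n => P n, fun n => (hP n).1, fun i => ?_⟩
  obtain ⟨n, hn, hGn⟩ := hG i
  have hGP : G n (P n) = e i (P n) := (congrFun hGn (P n)).symm
  exact ⟨n, ((hP n).2 (hGP ▸ he i (P n)) (hGP ▸ hn _ (P n).isLt)).trans hGP⟩

end Guessing

section Category

variable {X : Type*} [TopologicalSpace X]

theorem exists_seq_isNowhereDense_of_isMeagre {s : Set X} (hs : IsMeagre s) :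
    ∃ F : ℕ → Set X, (∀ n, IsNowhereDense (F n)) ∧ s ⊆ ⋃ n, F n := by
  obtain ⟨S, hS, hcount, hsub⟩ := isMeagre_iff_countable_union_isNowhereDense.1 hs
  obtain ⟨F, hF⟩ := (hcount.insert ∅).exists_eq_range (insert_nonempty _ _)
  refine ⟨F, fun n => ?_, ?_⟩
  · exact forall_mem_insert.2 ⟨isNowhereDense_empty, hS⟩ _ (hF ▸ mem_range_self n)
  · rw [← sUnion_range, ← hF]
    exact hsub.trans (sUnion_mono (subset_insert _ _))

theorem isMeagre_singleton [T1Space X] (x : X) [NeBot (𝓝[≠] x)] : IsMeagre {x} :=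
  (isClosed_singleton.isNowhereDense_iff.2 (interior_singleton x)).isMeagre

theorem infinite_of_iUnion_isMeagre_eq_univ [BaireSpace X] [Nonempty X] {ι : Type*}
    {M : ι → Set X} (hM : ∀ i, IsMeagre (M i)) (hcov : ⋃ i, M i = univ) : Infinite ι := by
  refine not_finite_iff_infinite.1 fun _ => ?_
  exact not_isMeagre_of_isOpen isOpen_univ univ_nonempty (hcov ▸ isMeagre_iUnion hM)

variable [T2Space X] [LocallyCompactSpace X] [SecondCountableTopology X] [Nonempty X]

variable (X) in
theorem exists_seq_isCompact_forall_isNowhereDense :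
    ∃ K : ℕ → Set X, (∀ n, IsCompact (K n)) ∧ (∀ n, (K n).Nonempty) ∧
      ∀ C, IsNowhereDense C → ∀ n, ∃ m, K m ⊆ K n ∧ Disjoint (K m) C := by
  let B : Set (Set X) :=
    {U ∈ TopologicalSpace.countableBasis X | U.Nonempty ∧ IsCompact (closure U)}
  have hB : ∀ W : Set X, IsOpen W → W.Nonempty → ∃ U ∈ B, closure U ⊆ W := by
    rintro W hW ⟨x, hx⟩
    obtain ⟨K, hK, hxK, hKW⟩ := exists_compact_subset hW hx
    obtain ⟨U, hU, hxU, hUK⟩ :=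
      (TopologicalSpace.isBasis_countableBasis X).exists_subset_of_mem_open hxK isOpen_interior
    have hclosure : closure U ⊆ K := closure_minimal (hUK.trans interior_subset) hK.isClosed
    exact ⟨U, ⟨hU, ⟨x, hxU⟩, hK.of_isClosed_subset isClosed_closure hclosure⟩, hclosure.trans hKW⟩
  obtain ⟨V, hV, -⟩ := hB univ isOpen_univ univ_nonempty
  obtain ⟨U, hU⟩ : ∃ U : ℕ → Set X, B = range U :=
    ((TopologicalSpace.countable_countableBasis X).mono (sep_subset _ _)).exists_eq_range ⟨V, hV⟩
  have hUB (n : ℕ) : U n ∈ B := hU.symm ▸ mem_range_self n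
  refine ⟨fun n => closure (U n), fun n => (hUB n).2.2, fun n => (hUB n).2.1.closure,
    fun C hC n => ?_⟩
  have hopen : IsOpen (U n) := TopologicalSpace.isOpen_of_mem_countableBasis (hUB n).1
  have hne : (U n \ closure C).Nonempty := by
    rw [sdiff_nonempty]
    intro hsub
    exact (hUB n).2.1.not_subset_empty (hC ▸ interior_maximal hsub hopen)
  obtain ⟨W, hW, hWU⟩ := hB _ (hopen.sdiff isClosed_closure) hne
  obtain ⟨m, rfl⟩ : W ∈ range U := hU ▸ hW
  have hWU' := subset_sdiff.1 hWU
  exact ⟨m, hWU'.1.trans subset_closure, hWU'.2.mono_right subset_closure⟩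

theorem Guessable.exists_forall_notMem_of_isNowhereDense {ι : Type*} [Infinite ι]
    (h : Guessable ι) {C : ι → Set X} (hC : ∀ i, IsNowhereDense (C i)) : ∃ x, ∀ i, x ∉ C i := by
  obtain ⟨K, hKc, hKne, hK⟩ := exists_seq_isCompact_forall_isNowhereDense X
  choose e hsub hdisj using fun i => hK (C i) (hC i)
  let r (m n : ℕ) : Prop := K m ⊆ K n
  have : Std.Refl r := ⟨fun _ => Subset.rfl⟩
  obtain ⟨P, hP, hmeet⟩ := h.exists_path_meeting r hsub
  obtain ⟨x, hx⟩ := IsCompact.nonempty_iInter_of_sequence_nonempty_isCompact_isClosed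
    (fun n => K (P n)) hP (fun _ => hKne _) (hKc _) (fun _ => (hKc _).isClosed)
  refine ⟨x, fun i hxi => ?_⟩
  obtain ⟨n, hn⟩ := hmeet i
  have hxe : x ∈ K (e i (P n)) := hn ▸ mem_iInter.1 hx (n + 1)
  exact disjoint_left.1 (hdisj i (P n)) hxe hxi

theorem not_guessable_of_iUnion_isMeagre_eq_univ {ι : Type*} {M : ι → Set X}
    (hM : ∀ i, IsMeagre (M i)) (hcov : ⋃ i, M i = univ) : ¬ Guessable ι := by
  intro h
  have : Infinite ι := infinite_of_iUnion_isMeagre_eq_univ hM hcov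
  choose F hF hMF using fun i => exists_seq_isNowhereDense_of_isMeagre (hM i)
  obtain ⟨x, hx⟩ := h.prod_nat.exists_forall_notMem_of_isNowhereDense
    (C := fun p => F p.1 p.2) fun p => hF p.1 p.2
  obtain ⟨i, hi⟩ := mem_iUnion.1 (hcov ▸ mem_univ x)
  obtain ⟨n, hn⟩ := mem_iUnion.1 (hMF i hi)
  exact hx (i, n) hn

end Category

section CovMeager

theorem exists_iUnion_isMeagre_mk_eq_covMeager :
    ∃ (ι : Type) (M : ι → Set ℝ), #ι = covMeager ∧ (∀ i, IsMeagre (M i)) ∧ ⋃ i, M i = univ :=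
  csInf_mem (s := {c : Cardinal | ∃ (I : Type) (M : I → Set ℝ),
    #I = c ∧ (∀ i, IsMeagre (M i)) ∧ ⋃ i, M i = univ})
    ⟨#ℝ, ℝ, fun x => {x}, rfl, fun _ => isMeagre_singleton _, iUnion_of_singleton ℝ⟩

theorem covMeager_le_continuum : covMeager ≤ 𝔠 :=
  csInf_le' ⟨ℝ, fun x => {x}, Cardinal.mk_real, fun _ => isMeagre_singleton _,
    iUnion_of_singleton ℝ⟩

theorem exists_not_guessable_mk_eq_covMeager : ∃ ι : Type, #ι = covMeager ∧ ¬ Guessable ι := by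
  obtain ⟨ι, M, hι, hM, hcov⟩ := exists_iUnion_isMeagre_mk_eq_covMeager
  exact ⟨ι, hι, not_guessable_of_iUnion_isMeagre_eq_univ hM hcov⟩

theorem exists_injective_forall_exists_forall_ne {ι : Type*} (h : ¬ Guessable ι) (hι : #ι ≤ 𝔠) :
    ∃ v : ι → ℕ → ℕ, Injective v ∧ ∀ g : ℕ → ℕ, ∃ i, ∀ n, v i n ≠ g n := by
  obtain ⟨f, hf⟩ : ∃ f : ι → ℕ → ℕ, ∀ g : ℕ → ℕ, ∃ i, ∀ n, f i n ≠ g n := by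
    simpa only [Guessable, not_forall, not_exists] using h
  obtain ⟨t⟩ : Nonempty (ι ↪ (ℕ → ℕ)) := by
    rw [← Cardinal.lift_mk_le']
    simpa using hι
  refine ⟨fun i n => Nat.pair (f i n) (t i n), fun i j hij => t.injective ?_, fun g => ?_⟩
  · exact funext fun n => (Nat.pair_eq_pair.1 (congrFun hij n)).2
  · obtain ⟨i, hi⟩ := hf fun n => (g n).unpair.1
    exact ⟨i, fun n hn => hi n (by simp [← hn])⟩

end CovMeager

section WeightedMetric

variable {X κ α : Type*}

/-- The metric on a set `X` of families `v x : κ → α` in which the distance of `x` and `y` is the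
supremum of the weights `w k` over the coordinates `k` at which `v x` and `v y` differ. -/
noncomputable abbrev weightedMetricSpace (v : X → κ → α) (hv : Injective v) (w : κ → ℝ≥0∞)
    (hw : ∀ k, w k ≠ 0) (hbdd : ⨆ k, w k ≠ ∞) : MetricSpace X :=
  letI : EMetricSpace X :=
    { edist := fun x y => ⨆ (k) (_ : v x k ≠ v y k), w k
      edist_self := fun x => by simp
      edist_comm := fun x y => by simp only [ne_comm]
      edist_triangle := fun x y z => iSup₂_le fun k hk => by
        by_cases hxy : v x k = v y k
        · exact le_add_of_le_right (le_iSup₂_of_le k (hxy ▸ hk) le_rfl)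
        · exact le_add_of_le_left (le_iSup₂_of_le k hxy le_rfl)
      eq_of_edist_eq_zero := fun {x y} h => hv <| funext fun k => by
        by_contra hk
        exact hw k (nonpos_iff_eq_zero.1 (h ▸ le_iSup₂_of_le k hk le_rfl)) }
  EMetricSpace.toMetricSpace fun _ _ =>
    ne_top_of_le_ne_top hbdd (iSup₂_le fun k _ => le_iSup w k)

theorem separableSpace_of_edist_le_iSup_weight [PseudoMetricSpace X] [Countable α]
    {v : X → κ → α} {w : κ → ℝ≥0∞} (hw : Tendsto w cofinite (𝓝 0))
    (h : ∀ x y, edist x y ≤ ⨆ (k) (_ : v x k ≠ v y k), w k) :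
    TopologicalSpace.SeparableSpace X := by
  suffices SecondCountableTopology X from inferInstance
  refine Metric.secondCountable_of_countable_discretization fun ε hε => ?_
  let T : Set κ := {k | ¬ w k < ENNReal.ofReal ε}
  have : Finite T := hw.eventually_lt_const (ENNReal.ofReal_pos.2 hε)
  refine ⟨T → α, Encodable.ofCountable _, fun x k => v x k, fun x y hxy => ?_⟩
  rw [← edist_le_ofReal hε.le]
  refine (h x y).trans (iSup₂_le fun k hk => ?_)
  by_contra! hlt
  exact hk (congrFun hxy ⟨k, hlt.not_gt⟩)

end WeightedMetric

section HausdorffMeasure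

theorem exists_iUnion_tsum_lt_of_mkMetric_lt {X : Type*} [EMetricSpace X] [MeasurableSpace X]
    [BorelSpace X] {φ : ℝ≥0∞ → ℝ≥0∞} {s : Set X} {c : ℝ≥0∞} (h : Measure.mkMetric φ s < c) :
    ∃ t : ℕ → Set X, s ⊆ ⋃ n, t n ∧
      ∑' n, ⨆ _ : (t n).Nonempty, φ (Metric.ediam (t n)) < c := by
  rw [Measure.mkMetric_apply] at h
  have hone := (le_iSup₂ (f := fun (r : ℝ≥0∞) (_ : 0 < r) =>
    ⨅ (t : ℕ → Set X) (_ : s ⊆ iUnion t) (_ : ∀ n, Metric.ediam (t n) ≤ r),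
      ∑' n, ⨆ _ : (t n).Nonempty, φ (Metric.ediam (t n))) 1 one_pos).trans_lt h
  simp only [iInf_lt_iff] at hone
  obtain ⟨t, hst, -, hsum⟩ := hone
  exact ⟨t, hst, hsum⟩

theorem le_mkMetric_univ_of_forall_exists_forall_ne {X α : Type*} [Nonempty α] [EMetricSpace X]
    [MeasurableSpace X] [BorelSpace X] {φ : ℝ≥0∞ → ℝ≥0∞} (hφ : Monotone φ) {c : ℝ≥0∞}
    {v : X → ℕ → α} (hv : ∀ g : ℕ → α, ∃ x, ∀ n, v x n ≠ g n)
    (hφv : ∀ x y n, v x n ≠ v y n → c / (n + 1) ≤ φ (edist x y)) :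
    c ≤ Measure.mkMetric φ (univ : Set X) := by
  by_contra! hlt
  obtain ⟨t, hcover, hsum⟩ := exists_iUnion_tsum_lt_of_mkMetric_lt hlt
  obtain ⟨k, hk, hdiam⟩ := exists_injective_forall_lt_div_of_tsum_lt hsum
  have hagree (n : ℕ) : ∃ a, ∀ x ∈ t n, v x (k n) = a := by
    obtain hempty | ⟨y, hy⟩ := (t n).eq_empty_or_nonempty
    · exact ⟨Classical.arbitrary α, by simp [hempty]⟩
    refine ⟨v y (k n), fun x hx => ?_⟩
    by_contra hne
    have hsmall : φ (Metric.ediam (t n)) < c / (k n + 1) :=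
      (le_iSup (fun _ : (t n).Nonempty => φ (Metric.ediam (t n))) ⟨y, hy⟩).trans_lt (hdiam n)
    exact ((hφv x y _ hne).trans
      (hφ (Metric.edist_le_ediam_of_mem hx hy))).not_gt hsmall
  choose a ha using hagree
  obtain ⟨x, hx⟩ := hv (extend k a fun _ => Classical.arbitrary α)
  obtain ⟨n, hn⟩ := mem_iUnion.1 (hcover (mem_univ x))
  exact hx (k n) (by rw [hk.extend_apply, ha n x hn])

theorem exists_tendsto_zero_div_le_gauge {φ : ℝ≥0∞ → ℝ≥0∞} (hφ : ∀ x, 0 < x → 0 < φ x) :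
    ∃ (w : ℕ → ℝ≥0∞) (c : ℝ≥0∞), (∀ n, w n ≠ 0) ∧ (∀ n, w n ≤ 1) ∧ Tendsto w atTop (𝓝 0) ∧
      0 < c ∧ ∀ n : ℕ, c / (n + 1) ≤ φ (w n) := by
  classical
  -- The cap keeps `c` finite when `φ 1 = ∞`.
  let c := min (φ 1) 1
  let p (n j : ℕ) : Prop := c / (n + 1) ≤ φ (2⁻¹ ^ j)
  have hc_top : c ≠ ∞ := ((min_le_right _ _).trans_lt ENNReal.one_lt_top).ne
  have hpow (j : ℕ) : (0 : ℝ≥0∞) < 2⁻¹ ^ j := ENNReal.pow_pos (by simp) j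
  have hc : Tendsto (fun n : ℕ => c / (n + 1)) atTop (𝓝 0) := by
    simpa [div_eq_mul_inv] using ENNReal.Tendsto.const_mul
      (ENNReal.tendsto_inv_nat_nhds_zero.comp (tendsto_add_atTop_nat 1)) (.inr hc_top)
  have hexp : Tendsto (fun n => Nat.findGreatest (p n) n) atTop atTop := by
    refine tendsto_atTop.2 fun j => ?_
    filter_upwards [hc.eventually_lt_const (hφ _ (hpow j)), eventually_ge_atTop j] with n hn hjn
    exact Nat.le_findGreatest hjn hn.le
  refine ⟨fun n => 2⁻¹ ^ Nat.findGreatest (p n) n, c, fun n => (hpow _).ne',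
    fun n => pow_le_one₀ zero_le (by simp), ?_, lt_min (hφ 1 one_pos) one_pos, fun n => ?_⟩
  · exact (ENNReal.tendsto_pow_atTop_nhds_zero_of_lt_one (by simp)).comp hexp
  · refine Nat.findGreatest_spec (P := p n) n.zero_le ?_
    calc c / (n + 1) ≤ c := ENNReal.div_le_of_le_mul (le_mul_of_one_le_right' le_add_self)
      _ ≤ φ (2⁻¹ ^ 0) := by simp [c]

end HausdorffMeasure

theorem exists_separable_card_covMeager_mkMetric_pos_general
    (φ : ℝ≥0∞ → ℝ≥0∞) (hmono : Monotone φ) (hpos : ∀ x, 0 < x → 0 < φ x) :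
    ∃ (X : Type) (_ : MetricSpace X) (_ : MeasurableSpace X) (_ : BorelSpace X),
      TopologicalSpace.SeparableSpace X ∧
      Cardinal.mk X = covMeager ∧
      0 < Measure.mkMetric φ (Set.univ : Set X) := by
  obtain ⟨X, hX, hguess⟩ := exists_not_guessable_mk_eq_covMeager
  obtain ⟨v, hv, hne⟩ :=
    exists_injective_forall_exists_forall_ne hguess (hX ▸ covMeager_le_continuum)
  obtain ⟨w, c, hw, hw_le, hw_tendsto, hc, hwφ⟩ := exists_tendsto_zero_div_le_gauge hpos
  let _ : MetricSpace X :=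
    weightedMetricSpace v hv w hw ((iSup_le hw_le).trans_lt ENNReal.one_lt_top).ne
  let _ : MeasurableSpace X := borel X
  have : BorelSpace X := ⟨rfl⟩
  have hedist (x y : X) : edist x y = ⨆ (n) (_ : v x n ≠ v y n), w n := rfl
  refine ⟨X, inferInstance, inferInstance, inferInstance, ?_, hX, hc.trans_le ?_⟩
  · exact separableSpace_of_edist_le_iSup_weight (Nat.cofinite_eq_atTop ▸ hw_tendsto)
      fun x y => (hedist x y).le
  · refine le_mkMetric_univ_of_forall_exists_forall_ne hmono hne fun x y n hn => ?_
    exact (hwφ n).trans (hmono ((le_iSup₂_of_le n hn le_rfl).trans_eq (hedist x y).symm))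

/-- For every gauge function `φ` (a strictly increasing bijection of `[0,∞]`,
encoding a strictly increasing bijection of `[0,∞)`) there exists a separable metric space
`(X,d)` whose cardinality equals `cov(M)` and whose `φ`-Hausdorff measure is positive:
`H^φ(X) > 0`, where `H^φ` is `MeasureTheory.Measure.mkMetric` applied to `φ`. -/
theorem exists_separable_card_covMeager_mkMetric_pos
    (φ : ℝ≥0∞ → ℝ≥0∞) (hmono : StrictMono φ) (hbij : Function.Bijective φ) :
    ∃ (X : Type) (_ : MetricSpace X) (_ : MeasurableSpace X) (_ : BorelSpace X),
      TopologicalSpace.SeparableSpace X ∧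
      Cardinal.mk X = covMeager ∧
      0 < Measure.mkMetric φ (Set.univ : Set X) := by
  refine exists_separable_card_covMeager_mkMetric_pos_general φ hmono.monotone fun x hx => ?_
  exact zero_le.trans_lt (hmono hx)
end
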